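/- arXiv:1606.03758 — 2 statements merged into one kernel-verified Lean document; each statement's English description precedes it below -/
import Mathlib

section
/- For every linear tree-to-word transducer M there exists an equivalent erase-ordered linear tree-to-word transducer M'; moreover, if M is earliest then M' can be chosen to be earliest as well. -/
namespace LTWpaper

/-- Trees over a ranked alphabet: a symbol of arity `n` with `n` children. -/
inductive RTree (F : Type) (ar : F → ℕ) : Type
  | node (f : F) (ts : Fin (ar f) → RTree F ar) : RTree F ar

/-- A rule right-hand side `u₀ q₁(x_{σ(1)}) u₁ … q_n(x_{σ(n)}) u_n`:
`word i` is `u_i` (for `i : Fin (n+1)`), `st i` is `q_{i+1}` (for `i : Fin n`),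
and position `i` reads the subtree `x_{perm i}`. -/
structure LTWRule (Δ Q : Type) (n : ℕ) where
  word : Fin (n + 1) → List Δ
  st : Fin n → Q
  perm : Equiv.Perm (Fin n)

/-- A (deterministic) linear tree-to-word transducer with axiom `pre init(x) post`. -/
structure LTW (F : Type) (ar : F → ℕ) (Δ Q : Type) where
  pre : List Δ
  init : Q
  post : List Δ
  rules : Q → (f : F) → Option (LTWRule Δ Q (ar f))

/-- `u 0 ++ ws 0 ++ u 1 ++ ws 1 ++ ⋯ ++ ws (n-1) ++ u n`. -/
def interleave {Δ : Type} (n : ℕ) (u : Fin (n + 1) → List Δ) (ws : Fin n → List Δ) :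
    List Δ :=
  u 0 ++ (List.finRange n).foldr (fun i acc => ws i ++ u i.succ ++ acc) []

/-- The partial function `⟦M⟧_q` computed by state `q`. -/
def LTW.semState {F Δ Q : Type} {ar : F → ℕ} (M : LTW F ar Δ Q) :
    RTree F ar → Q → Option (List Δ)
  | .node f ts, q =>
    match M.rules q f with
    | none => none
    | some r =>
      if h : ∀ i : Fin (ar f), (M.semState (ts (r.perm i)) (r.st i)).isSome then
        some (interleave (ar f) r.word fun i => (M.semState (ts (r.perm i)) (r.st i)).get (h i))
      else none

/-- The partial function `⟦M⟧` computed by the transducer. -/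
def LTW.sem {F Δ Q : Type} {ar : F → ℕ} (M : LTW F ar Δ Q) (t : RTree F ar) :
    Option (List Δ) :=
  (M.semState t M.init).map fun w => M.pre ++ w ++ M.post

/-- The output language `L_q` of a state. -/
def LTW.lang {F Δ Q : Type} {ar : F → ℕ} (M : LTW F ar Δ Q) (q : Q) : Set (List Δ) :=
  {w | ∃ t, M.semState t q = some w}

/-- Standing assumption: every state has nonempty domain. -/
def LTW.NonemptyDoms {F Δ Q : Type} {ar : F → ℕ} (M : LTW F ar Δ Q) : Prop :=
  ∀ q : Q, ∃ t w, M.semState t q = some w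

/-- `w^n`, the `n`-fold concatenation of the word `w`. -/
def listPow {Δ : Type} (w : List Δ) : ℕ → List Δ
  | 0 => []
  | n + 1 => w ++ listPow w n

/-- `lcp L = ε`: the only common prefix of all words of `L` is the empty word. -/
def LcpEps {Δ : Type} (L : Set (List Δ)) : Prop :=
  ∀ w : List Δ, (∀ v ∈ L, w <+: v) → w = []

/-- `lcs L = ε`: the only common suffix of all words of `L` is the empty word. -/
def LcsEps {Δ : Type} (L : Set (List Δ)) : Prop :=
  ∀ w : List Δ, (∀ v ∈ L, w <:+ v) → w = []

/-- A language is earliest if `lcp L = lcs L = ε`. -/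
def EarliestLang {Δ : Type} (L : Set (List Δ)) : Prop := LcpEps L ∧ LcsEps L

/-- `L ⊆ w*`. -/
def SubPow {Δ : Type} (w : List Δ) (L : Set (List Δ)) : Prop :=
  ∀ v ∈ L, ∃ n : ℕ, v = listPow w n

/-- `L` is periodic of period `w`: `w` is a smallest word with `L ⊆ w*`. -/
def PeriodicOf {Δ : Type} (L : Set (List Δ)) (w : List Δ) : Prop :=
  SubPow w L ∧ ∀ w' : List Δ, SubPow w' L → w.length ≤ w'.length

/-- `L` is periodic. -/
def Periodic {Δ : Type} (L : Set (List Δ)) : Prop := ∃ w, PeriodicOf L w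

/-- `L` is quasi-periodic on the left of handle `u` and period `w`:
`w` is a smallest word with `L ⊆ u w*`. -/
def QPLeftOf {Δ : Type} (L : Set (List Δ)) (u w : List Δ) : Prop :=
  (∀ v ∈ L, ∃ n : ℕ, v = u ++ listPow w n) ∧
  ∀ w' : List Δ, (∀ v ∈ L, ∃ n : ℕ, v = u ++ listPow w' n) → w.length ≤ w'.length

/-- `L` is quasi-periodic on the right of handle `u` and period `w`:
`w` is a smallest word with `L ⊆ w* u`. -/
def QPRightOf {Δ : Type} (L : Set (List Δ)) (u w : List Δ) : Prop :=
  (∀ v ∈ L, ∃ n : ℕ, v = listPow w n ++ u) ∧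
  ∀ w' : List Δ, (∀ v ∈ L, ∃ n : ℕ, v = listPow w' n ++ u) → w.length ≤ w'.length

/-- `L` is quasi-periodic (on the left or on the right). -/
def QuasiPeriodic {Δ : Type} (L : Set (List Δ)) : Prop :=
  (∃ u w, QPLeftOf L u w) ∨ (∃ u w, QPRightOf L u w)

/-- The language `L u = { v u : v ∈ L }`. -/
def appendLang {Δ : Type} (L : Set (List Δ)) (u : List Δ) : Set (List Δ) :=
  {v | ∃ x ∈ L, v = x ++ u}

/-- The language `L₁ u L₂ = { a u b : a ∈ L₁, b ∈ L₂ }`. -/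
def pairLang {Δ : Type} (L₁ : Set (List Δ)) (u : List Δ) (L₂ : Set (List Δ)) :
    Set (List Δ) :=
  {v | ∃ a ∈ L₁, ∃ b ∈ L₂, v = a ++ u ++ b}

/-- An LTW is earliest: every state `q` satisfies `lcp L_q = lcs L_q = ε`, and in every rule
every part `qᵢ(x) uᵢ` satisfies `lcp (L_{qᵢ} uᵢ) = ε`. -/
def LTW.Earliest {F Δ Q : Type} {ar : F → ℕ} (M : LTW F ar Δ Q) : Prop :=
  (∀ q : Q, EarliestLang (M.lang q)) ∧
  ∀ (q : Q) (f : F) (r : LTWRule Δ Q (ar f)), M.rules q f = some r →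
    ∀ i : Fin (ar f), LcpEps (appendLang (M.lang (r.st i)) (r.word i.succ))

/-- An erasing state: `L_q = {ε}`. -/
def LTW.Erasing {F Δ Q : Type} {ar : F → ℕ} (M : LTW F ar Δ Q) (q : Q) : Prop :=
  M.lang q = {([] : List Δ)}

/-- Erase-ordered: in every rule, if `qᵢ` is erasing then every later `q_j` is erasing,
`σ(i) ≤ σ(j)` and `u_j = ε`. -/
def LTW.EraseOrdered {F Δ Q : Type} {ar : F → ℕ} (M : LTW F ar Δ Q) : Prop :=
  ∀ (q : Q) (f : F) (r : LTWRule Δ Q (ar f)), M.rules q f = some r →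
    ∀ i j : Fin (ar f), M.Erasing (r.st i) → i ≤ j →
      M.Erasing (r.st j) ∧ r.perm i ≤ r.perm j ∧ r.word j.succ = []

/-- Co-reachable pairs of states of two transducers over the same input alphabet. -/
inductive CoReach {F Δ Q₁ Q₂ : Type} {ar : F → ℕ}
    (M₁ : LTW F ar Δ Q₁) (M₂ : LTW F ar Δ Q₂) : Q₁ → Q₂ → Prop
  | base : CoReach M₁ M₂ M₁.init M₂.init
  | step {q₁ : Q₁} {q₂ : Q₂} {f : F} {r₁ : LTWRule Δ Q₁ (ar f)} {r₂ : LTWRule Δ Q₂ (ar f)}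
      {i j : Fin (ar f)} :
      CoReach M₁ M₂ q₁ q₂ → M₁.rules q₁ f = some r₁ → M₂.rules q₂ f = some r₂ →
      r₁.perm i = r₂.perm j → CoReach M₁ M₂ (r₁.st i) (r₂.st j)

/-- Two LTWs are same-ordered: co-reachable states either both lack a rule for `f`,
or have rules for `f` with the same permutation. -/
def SameOrdered {F Δ Q₁ Q₂ : Type} {ar : F → ℕ}
    (M₁ : LTW F ar Δ Q₁) (M₂ : LTW F ar Δ Q₂) : Prop :=
  ∀ q₁ q₂, CoReach M₁ M₂ q₁ q₂ → ∀ f : F,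
    (M₁.rules q₁ f = none ∧ M₂.rules q₂ f = none) ∨
    ∃ (r₁ : LTWRule Δ Q₁ (ar f)) (r₂ : LTWRule Δ Q₂ (ar f)),
      M₁.rules q₁ f = some r₁ ∧ M₂.rules q₂ f = some r₂ ∧ r₁.perm = r₂.perm

/-- `Accessible q p`: state `p` is accessible from state `q`. -/
inductive LTW.Accessible {F Δ Q : Type} {ar : F → ℕ} (M : LTW F ar Δ Q) : Q → Q → Prop
  | refl (q : Q) : M.Accessible q q
  | step {q p : Q} {f : F} {r : LTWRule Δ Q (ar f)} (i : Fin (ar f)) :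
      M.Accessible q p → M.rules p f = some r → M.Accessible q (r.st i)

/-- Partial normal form. -/
def LTW.PartialNormalForm {F Δ Q : Type} {ar : F → ℕ} (M : LTW F ar Δ Q) : Prop :=
  (∀ q : Q, QuasiPeriodic (M.lang q) → EarliestLang (M.lang q)) ∧
  M.EraseOrdered ∧
  ∀ (q : Q) (f : F) (r : LTWRule Δ Q (ar f)), M.rules q f = some r →
    ∀ (i : ℕ) (hi : i + 1 < ar f),
      QuasiPeriodic (pairLang (M.lang (r.st ⟨i, Nat.lt_of_succ_lt hi⟩))
          (r.word (Fin.succ ⟨i, Nat.lt_of_succ_lt hi⟩)) (M.lang (r.st ⟨i + 1, hi⟩))) →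
      EarliestLang (pairLang (M.lang (r.st ⟨i, Nat.lt_of_succ_lt hi⟩))
          (r.word (Fin.succ ⟨i, Nat.lt_of_succ_lt hi⟩)) (M.lang (r.st ⟨i + 1, hi⟩))) ∧
      r.perm ⟨i, Nat.lt_of_succ_lt hi⟩ < r.perm ⟨i + 1, hi⟩

/-!
Since an erasing state outputs nothing, a rule keeps its meaning when the constant word behind an
erasing position is moved left to the nearest word that stays, and, once the erasing positions
contribute nothing at all, when they are moved to the end of the rule and sorted by the subtree
they read. The same states then compute the same functions, so erasing states and output languages
are unchanged. In an earliest transducer the word `u` behind an erasing state is already empty,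
because `lcp (L_q u) = u`; the constant words are then merely permuted along with their states.
-/

section Interleave

variable {Δ : Type} {n : ℕ}

theorem interleave_succ (u : Fin (n + 2) → List Δ) (ws : Fin (n + 1) → List Δ) :
    interleave (n + 1) u ws = u 0 ++ ws 0 ++ interleave n (Fin.tail u) (Fin.tail ws) := by
  simp [interleave, List.finRange_succ, List.foldr_map, Fin.tail]

theorem interleave_eq_append_flatMap (u : Fin (n + 1) → List Δ) (ws : Fin n → List Δ) :
    interleave n u ws = u 0 ++ (List.finRange n).flatMap fun i => ws i ++ u i.succ := by
  rw [interleave]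
  congr 1
  induction List.finRange n with
  | nil => rfl
  | cons i l ih => rw [List.foldr_cons, ih, List.flatMap_cons]

/-- The constant words `u₀, …, u_n` of a rule after the word behind each position in `E` has been
moved left, across the positions in `E`, to the nearest slot that does not follow one of them. -/
def absorbWords : {n : ℕ} → (E : Fin n → Prop) → [DecidablePred E] →
    (Fin (n + 1) → List Δ) → Fin (n + 1) → List Δ
  | 0, _, _, u => u
  | _ + 1, E, _, u =>
    let v := absorbWords (fun i => E i.succ) (Fin.tail u)
    if E 0 then Fin.cons (u 0 ++ v 0) (Fin.cons [] (Fin.tail v)) else Fin.cons (u 0) v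

theorem interleave_absorbWords (E : Fin n → Prop) [DecidablePred E] (u : Fin (n + 1) → List Δ)
    (ws : Fin n → List Δ) (hws : ∀ i, E i → ws i = []) :
    interleave n (absorbWords E u) ws = interleave n u ws := by
  induction n with
  | zero => rfl
  | succ n ih =>
    rw [interleave_succ u, ← ih (fun i => E i.succ) _ (Fin.tail ws) fun i => hws i.succ]
    by_cases hE : E 0
    · simp [absorbWords, hE, hws 0 hE, interleave, List.finRange_succ, List.foldr_map, Fin.tail]
    · simp [absorbWords, hE, interleave_succ]

theorem absorbWords_succ_eq_nil (E : Fin n → Prop) [DecidablePred E] (u : Fin (n + 1) → List Δ)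
    {i : Fin n} (hi : E i) : absorbWords E u i.succ = [] := by
  induction n with
  | zero => exact i.elim0
  | succ n ih =>
    cases i using Fin.cases with
    | zero => simp [absorbWords, hi]
    | succ i =>
      have hrec := ih (fun i => E i.succ) (Fin.tail u) hi
      by_cases hE : E 0 <;> simp [absorbWords, hE, Fin.tail, hrec]

theorem absorbWords_eq_self (E : Fin n → Prop) [DecidablePred E] (u : Fin (n + 1) → List Δ)
    (hu : ∀ i, E i → u i.succ = []) : absorbWords E u = u := by
  induction n with
  | zero => rfl
  | succ n ih =>
    have hrec := ih (fun i => E i.succ) (Fin.tail u) fun i => hu i.succ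
    by_cases hE : E 0
    · have htail : Fin.cons [] (Fin.tail (Fin.tail u)) = Fin.tail u := by
        rw [← hu 0 hE]
        exact Fin.cons_self_tail (Fin.tail u)
      have hzero : Fin.tail u 0 = [] := hu 0 hE
      simp [absorbWords, hE, hrec, hzero, htail]
    · simp [absorbWords, hE, hrec]

theorem flatMap_finRange_comp_perm {α : Type*} (g : Fin n → List α) (σ : Equiv.Perm (Fin n))
    (hσ : MonotoneOn σ {i | g (σ i) ≠ []}) :
    (List.finRange n).flatMap (g ∘ σ) = (List.finRange n).flatMap g := by
  classical
  have flatMap_filter (l : List (Fin n)) : (l.filter (g · ≠ [])).flatMap g = l.flatMap g := by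
    rw [List.flatMap_def, List.flatMap_def, ← List.flatten_filter_ne_nil (L := l.map g),
      List.filter_map]
    rfl
  have filter_map : ((List.finRange n).map σ).filter (g · ≠ []) =
      (List.finRange n).filter (g · ≠ []) := by
    have hsorted : (List.finRange n).Pairwise (· ≤ ·) :=
      (List.pairwise_lt_finRange n).imp le_of_lt
    refine (σ.map_finRange_perm.filter _).eq_of_pairwise
      (fun _ _ _ _ => le_antisymm) ?_ (hsorted.filter _)
    rw [List.pairwise_filter, List.pairwise_map]
    exact hsorted.imp fun hij hi hj => hσ (of_decide_eq_true hi) (of_decide_eq_true hj) hij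
  rw [← flatMap_filter (List.finRange n), ← filter_map, flatMap_filter, List.flatMap_map]
  rfl

theorem interleave_comp_perm (u : Fin (n + 1) → List Δ) (ws : Fin n → List Δ)
    (σ : Equiv.Perm (Fin n)) (hσ : MonotoneOn σ {i | ws (σ i) ++ u (σ i).succ ≠ []}) :
    interleave n (Fin.cons (u 0) fun i => u (σ i).succ) (ws ∘ σ) = interleave n u ws := by
  simp only [interleave_eq_append_flatMap, Fin.cons_zero, Fin.cons_succ]
  exact congrArg (u 0 ++ ·) (flatMap_finRange_comp_perm (fun i => ws i ++ u i.succ) σ hσ)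

end Interleave

section ErasePerm

variable {n : ℕ} (E : Fin n → Prop) [DecidablePred E] (p : Equiv.Perm (Fin n))

/-- The sorting key of a position: positions outside `E` come first, in their own order, and
positions in `E` last, ordered by the subtree they read according to `p`. -/
def eraseKey (i : Fin n) : Fin n ⊕ₗ Fin n :=
  if E i then Sum.inrₗ (p i) else Sum.inlₗ i

/-- The order in which an erase-ordered rule visits the positions of a rule whose erasing
positions are `E` and whose permutation is `p`: its `i`-th position is the old `erasePerm E p i`. -/
def erasePerm : Equiv.Perm (Fin n) := Tuple.sort (eraseKey E p)

theorem eraseKey_erasePerm_le {i j : Fin n} (hij : i ≤ j) :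
    eraseKey E p (erasePerm E p i) ≤ eraseKey E p (erasePerm E p j) :=
  Tuple.monotone_sort (eraseKey E p) hij

theorem monotoneOn_erasePerm : MonotoneOn (erasePerm E p) {i | ¬ E (erasePerm E p i)} := by
  intro i (hi : ¬ E (erasePerm E p i)) j (hj : ¬ E (erasePerm E p j)) hij
  simpa [eraseKey, hi, hj] using eraseKey_erasePerm_le E p hij

theorem monotone_comp_erasePerm : Monotone (E ∘ erasePerm E p) := by
  intro i j hij (hi : E (erasePerm E p i))
  by_contra (hj : ¬ E (erasePerm E p j))
  have hle := eraseKey_erasePerm_le E p hij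
  simp only [eraseKey, hi, hj, if_true, if_false] at hle
  exact Sum.Lex.not_inr_le_inl hle

theorem monotoneOn_perm_comp_erasePerm :
    MonotoneOn (p ∘ erasePerm E p) {i | E (erasePerm E p i)} := by
  intro i (hi : E (erasePerm E p i)) j (hj : E (erasePerm E p j)) hij
  simpa [eraseKey, hi, hj] using eraseKey_erasePerm_le E p hij

end ErasePerm

section Rule

variable {Δ Q : Type} {n : ℕ} (E : Q → Prop) [DecidablePred E] (r : LTWRule Δ Q n)

/-- The order in which `LTWRule.eraseOrder` visits the positions of `r`. -/
abbrev LTWRule.eraseOrderPerm : Equiv.Perm (Fin n) := erasePerm (fun i => E (r.st i)) r.perm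

/-- The erase-ordered form of a rule, where `E` is the set of states regarded as erasing. -/
def LTWRule.eraseOrder : LTWRule Δ Q n where
  word := Fin.cons (absorbWords (fun i => E (r.st i)) r.word 0)
    fun i => absorbWords (fun i => E (r.st i)) r.word (r.eraseOrderPerm E i).succ
  st := r.st ∘ r.eraseOrderPerm E
  perm := (r.eraseOrderPerm E).trans r.perm

theorem LTWRule.interleave_eraseOrder (ws : Fin n → List Δ) (hws : ∀ i, E (r.st i) → ws i = []) :
    interleave n (r.eraseOrder E).word (ws ∘ r.eraseOrderPerm E) = interleave n r.word ws := by
  rw [← interleave_absorbWords (fun i => E (r.st i)) r.word ws hws]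
  refine interleave_comp_perm _ ws _ ((monotoneOn_erasePerm _ _).mono fun i hi hE => hi ?_)
  rw [hws _ hE, absorbWords_succ_eq_nil _ _ hE, List.append_nil]

end Rule

namespace LTW

variable {F Δ Q : Type} {ar : F → ℕ} (M : LTW F ar Δ Q)

theorem semState_node_eq_some_iff {f : F} {ts : Fin (ar f) → RTree F ar} {q : Q} {w : List Δ} :
    M.semState (.node f ts) q = some w ↔
      ∃ r ws, M.rules q f = some r ∧ (∀ i, M.semState (ts (r.perm i)) (r.st i) = some (ws i)) ∧
        interleave (ar f) r.word ws = w := by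
  rw [semState]
  cases M.rules q f with
  | none => simp
  | some r =>
    simp only [Option.dite_none_right_eq_some, Option.some.injEq]
    constructor
    · rintro ⟨h, rfl⟩
      exact ⟨r, _, rfl, fun i => (Option.some_get (h i)).symm, rfl⟩
    · rintro ⟨_, ws, rfl, hws, rfl⟩
      exact ⟨fun i => by simp [hws], by simp [hws]⟩

variable {M} in
theorem Erasing.eq_nil {q : Q} (hq : M.Erasing q) {t : RTree F ar} {w : List Δ}
    (hw : M.semState t q = some w) : w = [] :=
  hq.subset ⟨t, hw⟩

open Classical in
/-- The transducer obtained from `M` by putting every rule into erase-ordered form. -/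
noncomputable def eraseOrder : LTW F ar Δ Q where
  pre := M.pre
  init := M.init
  post := M.post
  rules q f := (M.rules q f).map (LTWRule.eraseOrder M.Erasing)

variable {M} in
open Classical in
theorem eraseOrder_rules_eq_some_iff {q : Q} {f : F} {r' : LTWRule Δ Q (ar f)} :
    M.eraseOrder.rules q f = some r' ↔
      ∃ r, M.rules q f = some r ∧ r.eraseOrder M.Erasing = r' :=
  Option.map_eq_some_iff

theorem semState_eraseOrder (t : RTree F ar) (q : Q) :
    M.eraseOrder.semState t q = M.semState t q := by
  classical
  induction t generalizing q with
  | node f ts ih =>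
    ext w
    simp only [semState_node_eq_some_iff, eraseOrder_rules_eq_some_iff, ih]
    constructor
    · rintro ⟨_, ws', ⟨r, hr, rfl⟩, hws', rfl⟩
      set σ := r.eraseOrderPerm M.Erasing
      obtain ⟨ws, rfl⟩ : ∃ ws, ws ∘ σ = ws' := ⟨ws' ∘ σ.symm, by simp [Function.comp_assoc]⟩
      have hws : ∀ i, M.semState (ts (r.perm i)) (r.st i) = some (ws i) :=
        σ.surjective.forall.mpr hws'
      exact ⟨r, ws, hr, hws,
        (r.interleave_eraseOrder M.Erasing ws fun i hi => hi.eq_nil (hws i)).symm⟩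
    · rintro ⟨r, ws, hr, hws, rfl⟩
      exact ⟨_, _, ⟨r, hr, rfl⟩, fun i => hws _,
        r.interleave_eraseOrder M.Erasing ws fun i hi => hi.eq_nil (hws i)⟩

theorem sem_eraseOrder : M.eraseOrder.sem = M.sem := by
  funext t
  simp only [sem, semState_eraseOrder]
  rfl

theorem lang_eraseOrder (q : Q) : M.eraseOrder.lang q = M.lang q := by
  simp only [lang, semState_eraseOrder]

theorem eraseOrdered_eraseOrder : M.eraseOrder.EraseOrdered := by
  classical
  intro q f r' hr' i j hi hij
  obtain ⟨r, -, rfl⟩ := eraseOrder_rules_eq_some_iff.mp hr'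
  simp only [Erasing, lang_eraseOrder] at hi ⊢
  have hj : M.Erasing (r.st (r.eraseOrderPerm M.Erasing j)) :=
    monotone_comp_erasePerm (fun k => M.Erasing (r.st k)) r.perm hij hi
  exact ⟨hj, monotoneOn_perm_comp_erasePerm _ _ hi hj hij, absorbWords_succ_eq_nil _ _ hj⟩

variable {M}

theorem Earliest.word_succ_eq_nil (hM : M.Earliest) {q : Q} {f : F} {r : LTWRule Δ Q (ar f)}
    (hr : M.rules q f = some r) {i : Fin (ar f)} (hi : M.Erasing (r.st i)) :
    r.word i.succ = [] := by
  refine hM.2 q f r hr i _ ?_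
  rintro _ ⟨x, hx, rfl⟩
  obtain rfl : x = [] := hi.subset hx
  exact List.prefix_rfl

theorem Earliest.eraseOrder (hM : M.Earliest) : M.eraseOrder.Earliest := by
  classical
  refine ⟨fun q => M.lang_eraseOrder q ▸ hM.1 q, fun q f r' hr' i => ?_⟩
  obtain ⟨r, hr, rfl⟩ := eraseOrder_rules_eq_some_iff.mp hr'
  have hword : (r.eraseOrder M.Erasing).word i.succ =
      r.word (r.eraseOrderPerm M.Erasing i).succ := by
    simp only [LTWRule.eraseOrder, Fin.cons_succ]
    rw [absorbWords_eq_self _ _ fun _ => hM.word_succ_eq_nil hr]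
  rw [lang_eraseOrder, hword]
  exact hM.2 q f r hr _

end LTW

theorem exists_equivalent_eraseOrdered_general {F Δ Q : Type} {ar : F → ℕ} (M : LTW F ar Δ Q) :
    ∃ M' : LTW F ar Δ Q, M.sem = M'.sem ∧ M'.EraseOrdered ∧ (M.Earliest → M'.Earliest) :=
  ⟨M.eraseOrder, M.sem_eraseOrder.symm, M.eraseOrdered_eraseOrder, LTW.Earliest.eraseOrder⟩

/-- every LTW has an equivalent erase-ordered LTW, which can be chosen
earliest whenever the original transducer is earliest. -/
theorem exists_equivalent_eraseOrdered
    {F Δ Q : Type} {ar : F → ℕ} [Finite Q]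
    (M : LTW F ar Δ Q) (hdom : M.NonemptyDoms) :
    ∃ (Q' : Type) (_ : Finite Q') (M' : LTW F ar Δ Q'),
      M.sem = M'.sem ∧ M'.EraseOrdered ∧ (M.Earliest → M'.Earliest) :=
  ⟨Q, inferInstance, exists_equivalent_eraseOrdered_general M⟩

end LTWpaper
end

section
/- Let M be a linear tree-to-word transducer, let q be a state of M whose output language L_q is quasi-periodic on the left with period w, and let q' be a state accessible from q. Then L_{q'} is quasi-periodic, and its period is either the empty word ε or a cyclic rotation (shift) of w. -/
namespace LTWpaper

/-!
If `q'` is accessible from `q`, then `a L_{q'} b ⊆ L_q` for some fixed words `a`, `b`, obtained by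
completing the path from `q` to `q'` with arbitrary trees. Hence `a v b ∈ u w*` for every
`v ∈ L_{q'}`. Taking `v₀ ∈ L_{q'}` with the smallest exponent, each `v ∈ L_{q'}` is `v₀ y` with
`y b = b wᵏ`. As soon as one such `y` is nonempty, `w` is conjugated by `b` to a rotation `x` of
itself, `x b = b w`, so `y = xᵏ` and `L_{q'} ⊆ v₀ x*`. Minimality of `w` means that `w` is
primitive; so is its rotation `x`, and the Fine and Wilf theorem then shows that no word shorter
than `x` can be a period.
-/

section Words

variable {Δ : Type} {b w w' x y z : List Δ} {d e k m : ℕ}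

theorem isRotated_iff_exists_append :
    w ~r w' ↔ ∃ w₁ w₂, w = w₁ ++ w₂ ∧ w' = w₂ ++ w₁ := by
  constructor
  · rintro ⟨n, rfl⟩
    exact ⟨_, _, (List.take_append_drop _ w).symm, List.rotate_eq_drop_append_take_mod⟩
  · rintro ⟨w₁, w₂, rfl, rfl⟩
    exact List.isRotated_append

theorem listPow_one (w : List Δ) : listPow w 1 = w :=
  List.append_nil w

theorem nil_listPow (n : ℕ) : listPow ([] : List Δ) n = [] := by
  induction n with
  | zero => rfl
  | succ _ ih => exact ih

theorem listPow_add (w : List Δ) (m n : ℕ) :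
    listPow w (m + n) = listPow w m ++ listPow w n := by
  induction m with
  | zero => rw [Nat.zero_add, listPow, List.nil_append]
  | succ m ih => rw [Nat.succ_add, listPow, listPow, ih, List.append_assoc]

theorem listPow_succ (w : List Δ) (n : ℕ) : listPow w (n + 1) = listPow w n ++ w := by
  rw [listPow_add, listPow_one]

theorem listPow_mul (w : List Δ) (m n : ℕ) : listPow w (m * n) = listPow (listPow w m) n := by
  induction n with
  | zero => rfl
  | succ n ih => rw [Nat.mul_succ, listPow_add, ih, listPow_succ]

theorem length_listPow (w : List Δ) (n : ℕ) : (listPow w n).length = n * w.length := by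
  induction n with
  | zero => rw [listPow, List.length_nil, Nat.zero_mul]
  | succ n ih => rw [listPow_succ, List.length_append, ih, Nat.succ_mul]

theorem listPow_append_of_append_eq (h : y ++ b = b ++ x) (n : ℕ) :
    listPow y n ++ b = b ++ listPow x n := by
  induction n with
  | zero => exact (List.append_nil b).symm
  | succ n ih =>
    rw [listPow, listPow, List.append_assoc, ih, ← List.append_assoc, h, List.append_assoc]

theorem rotate_listPow (w : List Δ) (n k : ℕ) :
    (listPow w n).rotate k = listPow (w.rotate k) n := by
  have rotate_one (v : List Δ) : (listPow v n).rotate 1 = listPow (v.rotate 1) n := by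
    rcases v with _ | ⟨c, v⟩
    · simp only [nil_listPow, List.rotate_nil]
    rcases n with _ | n
    · rfl
    have shift : listPow (c :: v) n ++ [c] = [c] ++ listPow (v ++ [c]) n :=
      (listPow_append_of_append_eq (by simp) n)
    simp [listPow, shift]
  induction k with
  | zero => simp only [List.rotate_zero]
  | succ k ih => rw [← List.rotate_rotate, ih, rotate_one, List.rotate_rotate]

theorem exists_isRotated_append_eq (h : y ++ b = b ++ listPow w k) (hy : y ≠ []) :
    ∃ x, w ~r x ∧ x ++ b = b ++ w := by
  induction b using List.reverseRecOn generalizing w with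
  | nil => exact ⟨w, .refl w, by simp⟩
  | append_singleton b c ih =>
    rcases k with _ | k
    · exact absurd (by simpa [listPow] using h) hy
    rcases w.eq_nil_or_concat with rfl | ⟨w, d, rfl⟩
    · exact absurd (by simpa [nil_listPow] using h) hy
    rw [List.concat_eq_append] at h ⊢
    obtain rfl : c = d := by
      have hlast := congrArg List.getLast? h
      simpa [listPow_succ, ← List.append_assoc] using hlast
    have shift : [c] ++ listPow (w ++ [c]) (k + 1) = listPow (c :: w) (k + 1) ++ [c] :=
      (listPow_append_of_append_eq (by simp) _).symm
    obtain ⟨x, hx, hxb⟩ := ih (w := c :: w) <| List.append_cancel_right (bs := [c]) <| by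
      simpa [shift] using h
    refine ⟨x, (List.isRotated_concat c w).trans hx, ?_⟩
    rw [← List.append_assoc, hxb]
    simp

theorem hasPeriod_listPow (w : List Δ) (n : ℕ) : (listPow w n).HasPeriod w.length := by
  rcases n with _ | n
  · exact List.hasPeriod_empty _
  have htake : (listPow w (n + 1)).take w.length = w := by rw [listPow, List.take_left]
  rw [List.HasPeriod, htake]
  exact ⟨w, by rw [← listPow_succ, listPow]⟩

theorem eq_listPow_of_hasPeriod (h : w.HasPeriod d) (hlen : w.length = e * d) (he : e ≠ 0) :
    w = listPow (w.take d) e := by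
  have prefix_pow (n : ℕ) : w <+: listPow (w.take d) n ++ w := by
    induction n with
    | zero => exact List.prefix_rfl
    | succ n ih =>
      rw [listPow, List.append_assoc]
      exact List.IsPrefix.trans h ((List.prefix_append_right_inj _).2 ih)
  have hd : d ≤ w.length := hlen ▸ Nat.le_mul_of_pos_left d (Nat.pos_of_ne_zero he)
  have hlen' : w.length = (listPow (w.take d) e).length := by
    rw [length_listPow, List.length_take_of_le hd, hlen]
  exact (List.prefix_of_prefix_length_le (prefix_pow e) (List.prefix_append _ _)
    hlen'.le).eq_of_length hlen'

/-- A word is primitive if it is nonempty and not a proper power of another word. -/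
def IsPrimitiveWord (w : List Δ) : Prop :=
  w ≠ [] ∧ ∀ r e, w = listPow r e → e = 1

theorem IsPrimitiveWord.of_isRotated (hw : IsPrimitiveWord w) (h : w ~r w') :
    IsPrimitiveWord w' := by
  obtain ⟨n, hn⟩ := h.symm
  refine ⟨?_, fun r e he => hw.2 (r.rotate n) e ?_⟩
  · rintro rfl
    exact hw.1 (List.isRotated_nil_iff.1 h)
  · rw [← hn, he, rotate_listPow]

theorem IsPrimitiveWord.length_le_of_listPow_eq (hx : IsPrimitiveWord x)
    (h : listPow x k = listPow z m) (hk : k ≠ 0) : x.length ≤ z.length := by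
  set g := x.length.gcd z.length
  have hxpos : 0 < x.length := List.length_pos_iff.2 hx.1
  have hlen : k * x.length = m * z.length := by rw [← length_listPow, h, length_listPow]
  have hmz : 0 < m * z.length := hlen ▸ Nat.mul_pos (Nat.pos_of_ne_zero hk) hxpos
  -- Squaring the common power makes it long enough for Fine and Wilf.
  have hsq : listPow x (k + k) = listPow z (m + m) := by rw [listPow_add, listPow_add, h]
  have hper : (listPow x (k + k)).HasPeriod g := by
    refine (hasPeriod_listPow x _).gcd (hsq ▸ hasPeriod_listPow z _) ?_
    have := Nat.le_mul_of_pos_left x.length (Nat.pos_of_ne_zero hk)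
    have := Nat.le_mul_of_pos_left z.length (Nat.pos_of_mul_pos_right hmz)
    rw [length_listPow, Nat.add_mul]
    omega
  have hinfix : x <:+: listPow x (k + k) := by
    obtain ⟨n, rfl⟩ := Nat.exists_eq_succ_of_ne_zero hk
    exact ⟨[], listPow x (n + (n + 1)), by rw [← Nat.add_assoc, Nat.succ_add]; rfl⟩
  obtain ⟨e, he⟩ : g ∣ x.length := Nat.gcd_dvd_left _ _
  have he' : x.length = e * g := he.trans (Nat.mul_comm _ _)
  obtain rfl : e = 1 := hx.2 _ e <| eq_listPow_of_hasPeriod (hper.infix hinfix) he' <| by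
    rintro rfl
    omega
  calc x.length = g := by rw [he', Nat.one_mul]
    _ ≤ z.length := Nat.gcd_le_right _ (Nat.pos_of_mul_pos_left hmz)

end Words

section Languages

variable {Δ : Type} {L L' : Set (List Δ)} {a b u v w x : List Δ}

theorem QPLeftOf.isPrimitiveWord (h : QPLeftOf L u w) (hw : w ≠ []) : IsPrimitiveWord w := by
  refine ⟨hw, fun r e he => ?_⟩
  have hle : w.length ≤ r.length := h.2 r fun v hv => by
    obtain ⟨n, rfl⟩ := h.1 v hv
    exact ⟨e * n, by rw [he, listPow_mul]⟩
  have hpos : 0 < w.length := List.length_pos_iff.2 hw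
  have hlen : w.length = e * r.length := by rw [he, length_listPow]
  nlinarith

theorem qpLeftOf_nil_of_subsingleton (hL : L.Subsingleton) (hv : v ∈ L) : QPLeftOf L v [] :=
  ⟨fun v' hv' => ⟨0, by rw [hL hv' hv, listPow, List.append_nil]⟩, fun _ _ => Nat.zero_le _⟩

theorem IsPrimitiveWord.qpLeftOf (hx : IsPrimitiveWord x)
    (hL : ∀ v ∈ L, ∃ n, v = u ++ listPow x n) (hv : v ∈ L) (hvu : v ≠ u) : QPLeftOf L u x := by
  refine ⟨hL, fun z hz => ?_⟩
  obtain ⟨k, rfl⟩ := hL v hv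
  obtain ⟨m, hm⟩ := hz _ hv
  refine hx.length_le_of_listPow_eq (List.append_cancel_left hm) ?_
  rintro rfl
  exact hvu (List.append_nil u)

theorem exists_forall_append_eq_append_listPow (hne : L.Nonempty)
    (hL : ∀ v ∈ L, ∃ n, a ++ v ++ b = u ++ listPow w n) :
    ∃ v₀ ∈ L, ∀ v ∈ L, ∃ y k, v = v₀ ++ y ∧ y ++ b = b ++ listPow w k := by
  classical
  have hexp : ∃ n, ∃ v ∈ L, a ++ v ++ b = u ++ listPow w n := by
    obtain ⟨v, hv⟩ := hne
    obtain ⟨n, hn⟩ := hL v hv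
    exact ⟨n, v, hv, hn⟩
  obtain ⟨v₀, hv₀, h₀⟩ := Nat.find_spec hexp
  refine ⟨v₀, hv₀, fun v hv => ?_⟩
  obtain ⟨n, hn⟩ := hL v hv
  obtain ⟨k, rfl⟩ := Nat.exists_eq_add_of_le (Nat.find_min' hexp ⟨v, hv, hn⟩)
  have hvb : v ++ b = v₀ ++ (b ++ listPow w k) := by
    rw [listPow_add, ← List.append_assoc, ← h₀] at hn
    simpa using hn
  have hlen : v₀.length ≤ v.length := by
    have := congrArg List.length hvb
    simp only [List.length_append] at this
    omega
  obtain ⟨y, rfl⟩ : v₀ <+: v :=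
    List.prefix_of_prefix_length_le ⟨_, hvb.symm⟩ (List.prefix_append v b) hlen
  exact ⟨y, k, rfl, List.append_cancel_left (by rwa [← List.append_assoc])⟩

theorem QPLeftOf.exists_isRotated_of_append_mem (h : QPLeftOf L u w) (hne : L'.Nonempty)
    (hL' : ∀ v ∈ L', a ++ v ++ b ∈ L) :
    ∃ u' w', QPLeftOf L' u' w' ∧ (w' = [] ∨ w ~r w') := by
  obtain ⟨v₀, hv₀, hfactor⟩ :=
    exists_forall_append_eq_append_listPow hne fun v hv => h.1 _ (hL' v hv)
  rcases L'.subsingleton_or_nontrivial with hsub | hnontriv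
  · exact ⟨v₀, [], qpLeftOf_nil_of_subsingleton hsub hv₀, .inl rfl⟩
  obtain ⟨v₁, hv₁, hv₁₀⟩ := hnontriv.exists_ne v₀
  obtain ⟨y₁, k₁, rfl, hy₁⟩ := hfactor v₁ hv₁
  have hy₁ne : y₁ ≠ [] := by
    rintro rfl
    exact hv₁₀ (List.append_nil v₀)
  have hw : w ≠ [] := by
    rintro rfl
    exact hy₁ne (by simpa [nil_listPow] using hy₁)
  obtain ⟨x, hwx, hxb⟩ := exists_isRotated_append_eq hy₁ hy₁ne
  have hpow : ∀ v ∈ L', ∃ k, v = v₀ ++ listPow x k := fun v hv => by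
    obtain ⟨y, k, rfl, hy⟩ := hfactor v hv
    rw [← listPow_append_of_append_eq hxb k] at hy
    exact ⟨k, by rw [List.append_cancel_right hy]⟩
  have hx : IsPrimitiveWord x := (h.isPrimitiveWord hw).of_isRotated hwx
  exact ⟨v₀, x, hx.qpLeftOf hpow hv₁ hv₁₀, .inr hwx⟩

end Languages

theorem interleave_eq_flatMap {Δ : Type} {n : ℕ} (u : Fin (n + 1) → List Δ)
    (ws : Fin n → List Δ) :
    interleave n u ws = u 0 ++ (List.finRange n).flatMap fun i => ws i ++ u i.succ := by
  simp only [interleave, List.foldr_append_eq_append, List.append_nil, List.flatMap]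

theorem exists_interleave_update_eq {Δ : Type} {n : ℕ} (u : Fin (n + 1) → List Δ)
    (ws : Fin n → List Δ) (i : Fin n) :
    ∃ a b, ∀ v, interleave n u (Function.update ws i v) = a ++ v ++ b := by
  obtain ⟨s, t, hst⟩ := List.append_of_mem (List.mem_finRange i)
  have hi : i ∉ s ++ t :=
    (List.nodup_cons.1 (List.nodup_middle.1 (hst ▸ List.nodup_finRange n))).1
  have off_i {l : List (Fin n)} (hl : i ∉ l) (v : List Δ) :
      (l.flatMap fun j => Function.update ws i v j ++ u j.succ) =
        l.flatMap fun j => ws j ++ u j.succ :=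
    List.flatMap_congr fun j hj => by rw [Function.update_of_ne (ne_of_mem_of_not_mem hj hl)]
  rw [List.mem_append, not_or] at hi
  refine ⟨u 0 ++ s.flatMap fun j => ws j ++ u j.succ,
    u i.succ ++ t.flatMap fun j => ws j ++ u j.succ, fun v => ?_⟩
  rw [interleave_eq_flatMap, hst, List.flatMap_append, List.flatMap_cons, off_i hi.1,
    off_i hi.2, Function.update_self]
  simp only [List.append_assoc]

section Transducers

variable {F Δ Q : Type} {ar : F → ℕ} {M : LTW F ar Δ Q} {q q' : Q}

theorem LTW.interleave_mem_lang {f : F} {r : LTWRule Δ Q (ar f)} (hr : M.rules q f = some r)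
    {ws : Fin (ar f) → List Δ} (hws : ∀ i, ws i ∈ M.lang (r.st i)) :
    interleave (ar f) r.word ws ∈ M.lang q := by
  choose ts hts using hws
  refine ⟨.node f fun i => ts (r.perm.symm i), ?_⟩
  rw [LTW.semState, hr]
  simp [hts]

theorem LTW.Accessible.exists_append_mem_lang (hdom : M.NonemptyDoms)
    (hacc : M.Accessible q q') : ∃ a b, ∀ v ∈ M.lang q', a ++ v ++ b ∈ M.lang q := by
  induction hacc with
  | refl => exact ⟨[], [], fun v hv => by simpa using hv⟩
  | @step p f r i _ hr ih =>
    obtain ⟨a, b, hab⟩ := ih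
    choose t out hout using hdom
    obtain ⟨a', b', hab'⟩ := exists_interleave_update_eq r.word (fun j => out (r.st j)) i
    refine ⟨a ++ a', b' ++ b, fun v hv => ?_⟩
    have hmem : a' ++ v ++ b' ∈ M.lang p := hab' v ▸ LTW.interleave_mem_lang hr
      ((Function.forall_update_iff _ fun j w => w ∈ M.lang (r.st j)).2
        ⟨hv, fun j _ => ⟨t (r.st j), hout (r.st j)⟩⟩)
    simpa using hab _ hmem

end Transducers

theorem accessible_of_quasiPeriodic_left_general
    {F Δ Q : Type} {ar : F → ℕ} (M : LTW F ar Δ Q) (hdom : M.NonemptyDoms)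
    {q q' : Q} {u w : List Δ}
    (hqp : QPLeftOf (M.lang q) u w)
    (hacc : M.Accessible q q') :
    ∃ u' w' : List Δ, QPLeftOf (M.lang q') u' w' ∧ (w' = [] ∨ w ~r w') := by
  obtain ⟨a, b, hab⟩ := hacc.exists_append_mem_lang hdom
  obtain ⟨t, v, hv⟩ := hdom q'
  exact hqp.exists_isRotated_of_append_mem ⟨v, t, hv⟩ hab

/-- if `L_q` is quasi-periodic on the left with period `w` and `q'` is
accessible from `q`, then `L_{q'}` is quasi-periodic with period `ε` or a cyclic
rotation of `w`. -/
theorem accessible_of_quasiPeriodic_left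
    {F Δ Q : Type} {ar : F → ℕ} [Finite Q]
    (M : LTW F ar Δ Q) (hdom : M.NonemptyDoms)
    {q q' : Q} {u w : List Δ}
    (hqp : QPLeftOf (M.lang q) u w)
    (hacc : M.Accessible q q') :
    ∃ u' w' : List Δ,
      (QPLeftOf (M.lang q') u' w' ∨ QPRightOf (M.lang q') u' w') ∧
      (w' = [] ∨ ∃ w₁ w₂ : List Δ, w = w₁ ++ w₂ ∧ w' = w₂ ++ w₁) := by
  obtain ⟨u', w', hqp', hw'⟩ := accessible_of_quasiPeriodic_left_general M hdom hqp hacc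
  exact ⟨u', w', .inl hqp', hw'.imp_right isRotated_iff_exists_append.1⟩

end LTWpaper
end
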